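/- The limit of W^(1)[g_n], as n tends to infinity through odd values, equals 2/π. -/

import Mathlib

open Finset

namespace BKS

/-- sign function: 1 if z ≥ 0, -1 otherwise. -/
noncomputable def sgn (z : ℝ) : ℝ := if 0 ≤ z then 1 else -1

/-- encode Bool as the ±1 value of a bit. -/
def chi (b : Bool) : ℝ := if b then 1 else -1

/-- Fourier coefficient of f at S. -/
noncomputable def fourierCoeff {n : ℕ} (f : (Fin n → Bool) → ℝ) (S : Finset (Fin n)) : ℝ :=
  (1 / 2 ^ n : ℝ) * ∑ x : Fin n → Bool, f x * ∏ i ∈ S, chi (x i)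

/-- Fourier weight of f at level k: W^(k)[f]. -/
noncomputable def fourierWeight {n : ℕ} (k : ℕ) (f : (Fin n → Bool) → ℝ) : ℝ :=
  ∑ S ∈ Finset.univ.filter (fun S : Finset (Fin n) => S.card = k), (fourierCoeff f S) ^ 2

/-- Noise stability of f at ρ. -/
noncomputable def noiseStab {n : ℕ} (ρ : ℝ) (f : (Fin n → Bool) → ℝ) : ℝ :=
  ∑ k ∈ Finset.range (n + 1), ρ ^ k * fourierWeight k f

/-- Majority function on n bits. -/
noncomputable def Maj (n : ℕ) : (Fin n → Bool) → ℝ := fun x => sgn (∑ i, chi (x i))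

/-- The function g_n(x) = sgn(2(x_1 + ⋯ + x_{n-3}) + x_{n-2} + x_{n-1} + x_n). -/
noncomputable def gfun (n : ℕ) : (Fin n → Bool) → ℝ :=
  fun x => sgn (∑ i : Fin n, (if (i : ℕ) < n - 3 then (2 : ℝ) else 1) * chi (x i))

/-- f is a linear threshold function. -/
def IsLTF {n : ℕ} (f : (Fin n → Bool) → ℝ) : Prop :=
  ∃ (w0 : ℝ) (w : Fin n → ℝ), ∀ x, f x = sgn (w0 + ∑ i, w i * chi (x i))

/-!
Write `g_n` as the majority of its `m = n - 3` heavy bits, with ties broken by the light bits. Then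
`g_n = Maj_m ⊗ 1 + tie_m ⊗ (Maj_3 - 1)`, where `tie_m` is the indicator of a tie. As `tie_m` is
even, it does not affect the degree-one coefficients at heavy bits, so the degree-one weight is that
of `Maj_m` plus `p ^ 2` times that of `Maj_3`, where `p` is the probability of a tie. For
`m = 2 * k` the first summand is `2 * k * p ^ 2`, and `(2 * k + 1) * p ^ 2` is the inverse of
the `k`-th Wallis product, so it tends to `2 / π`, while `p ^ 2` tends to `0`. The same holds
for every rule that breaks ties by a fixed number of further bits.
-/

section Fourier

variable {m l n : ℕ}

lemma chi_not (b : Bool) : chi (!b) = -chi b := by cases b <;> simp [chi]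

lemma fourierCoeff_add (f g : (Fin n → Bool) → ℝ) (S : Finset (Fin n)) :
    fourierCoeff (f + g) S = fourierCoeff f S + fourierCoeff g S := by
  simp only [fourierCoeff, Pi.add_apply, add_mul, sum_add_distrib, mul_add]

lemma fourierCoeff_sub (f g : (Fin n → Bool) → ℝ) (S : Finset (Fin n)) :
    fourierCoeff (f - g) S = fourierCoeff f S - fourierCoeff g S := by
  simp only [fourierCoeff, Pi.sub_apply, sub_mul, sum_sub_distrib, mul_sub]

lemma fourierCoeff_one_empty : fourierCoeff (1 : (Fin n → Bool) → ℝ) ∅ = 1 := by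
  simp [fourierCoeff]

lemma fourierCoeff_eq_zero_of_even {f : (Fin n → Bool) → ℝ}
    (hf : ∀ x, f (fun i => !x i) = f x) {S : Finset (Fin n)} (hS : Odd #S) :
    fourierCoeff f S = 0 := by
  have negate_term (x : Fin n → Bool) :
      f (fun i => !x i) * ∏ i ∈ S, chi (!x i) = -(f x * ∏ i ∈ S, chi (x i)) := by
    simp only [hf, chi_not, prod_neg, hS.neg_one_pow]
    ring
  have sum_eq_neg := (compl_bijective (α := Fin n → Bool)).sum_comp
    fun x => f x * ∏ i ∈ S, chi (x i)
  have sum_eq_zero : ∑ x, f x * ∏ i ∈ S, chi (x i) = 0 := by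
    rw [← self_eq_neg, ← sum_neg_distrib, ← sum_eq_neg]
    exact sum_congr rfl fun x _ => negate_term x
  rw [fourierCoeff, sum_eq_zero, mul_zero]

lemma fourierCoeff_one_of_odd {S : Finset (Fin n)} (hS : Odd #S) :
    fourierCoeff (1 : (Fin n → Bool) → ℝ) S = 0 :=
  fourierCoeff_eq_zero_of_even (fun _ => rfl) hS

lemma fourierCoeff_singleton (f : (Fin (n + 1) → Bool) → ℝ) (i : Fin (n + 1)) :
    fourierCoeff f {i} = 1 / 2 ^ (n + 1) *
      ∑ y : Fin n → Bool, (f (i.insertNth true y) - f (i.insertNth false y)) := by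
  rw [fourierCoeff, ← (Fin.insertNthEquiv (fun _ => Bool) i).sum_comp,
    Fintype.sum_prod_type_right]
  simp [Fin.insertNthEquiv, chi, sub_eq_add_neg]

lemma fourierWeight_one_eq_sum_sq (f : (Fin n → Bool) → ℝ) :
    fourierWeight 1 f = ∑ i, fourierCoeff f {i} ^ 2 := by
  rw [fourierWeight, univ_filter_card_eq, powersetCard_one, sum_map]
  rfl

/-- The tensor product `(y, z) ↦ f y * g z` of functions of disjoint blocks of bits, with `(y, z)`
encoded as `Fin.append y z`. -/
def tensor (f : (Fin m → Bool) → ℝ) (g : (Fin l → Bool) → ℝ) : (Fin (m + l) → Bool) → ℝ :=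
  fun x => f (fun i => x (Fin.castAdd l i)) * g (fun j => x (Fin.natAdd m j))

lemma fourierCoeff_tensor (f : (Fin m → Bool) → ℝ) (g : (Fin l → Bool) → ℝ)
    (S : Finset (Fin m)) (T : Finset (Fin l)) :
    fourierCoeff (tensor f g) ((S.disjSum T).map finSumFinEquiv.toEmbedding) =
      fourierCoeff f S * fourierCoeff g T := by
  simp only [fourierCoeff]
  rw [← (Fin.appendEquiv m l).sum_comp, Fintype.sum_prod_type, mul_mul_mul_comm,
    Fintype.sum_mul_sum, pow_add, one_div_mul_one_div]
  refine congrArg _ (sum_congr rfl fun y _ => sum_congr rfl fun z _ => ?_)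
  simp only [tensor, Fin.appendEquiv, Equiv.coe_fn_mk, Fin.append_left, Fin.append_right,
    prod_map, prod_disjSum, Equiv.coe_toEmbedding, finSumFinEquiv_apply_left,
    finSumFinEquiv_apply_right]
  ring

lemma fourierCoeff_tensor_castAdd (f : (Fin m → Bool) → ℝ) (g : (Fin l → Bool) → ℝ) (i : Fin m) :
    fourierCoeff (tensor f g) {Fin.castAdd l i} = fourierCoeff f {i} * fourierCoeff g ∅ := by
  simpa using fourierCoeff_tensor f g {i} ∅

lemma fourierCoeff_tensor_natAdd (f : (Fin m → Bool) → ℝ) (g : (Fin l → Bool) → ℝ) (j : Fin l) :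
    fourierCoeff (tensor f g) {Fin.natAdd m j} = fourierCoeff f ∅ * fourierCoeff g {j} := by
  simpa using fourierCoeff_tensor f g ∅ {j}

end Fourier

section Majority

variable {m n : ℕ}

lemma sgn_of_nonneg {z : ℝ} (hz : 0 ≤ z) : sgn z = 1 := if_pos hz

lemma sgn_of_neg {z : ℝ} (hz : z < 0) : sgn z = -1 := if_neg hz.not_ge

lemma abs_sum_chi_le (x : Fin n → Bool) : |∑ i, chi (x i)| ≤ n := by
  calc |∑ i, chi (x i)| ≤ ∑ i, |chi (x i)| := abs_sum_le_sum_abs _ _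
    _ = ∑ _i : Fin n, (1 : ℝ) := sum_congr rfl fun i _ => by cases x i <;> simp [chi]
    _ = n := by simp

lemma sum_chi_eq (x : Fin n → Bool) : ∑ i, chi (x i) = 2 * #{i | x i} - n := by
  have chi_eq (b : Bool) : chi b = 2 * (if b then 1 else 0) - 1 := by
    cases b <;> norm_num [chi]
  simp only [chi_eq, sum_sub_distrib, ← mul_sum, sum_boole, sum_const, card_univ,
    Fintype.card_fin, nsmul_eq_mul, mul_one]

lemma sum_chi_not (x : Fin n → Bool) : ∑ i, chi (!x i) = -∑ i, chi (x i) := by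
  simp only [chi_not, sum_neg_distrib]

lemma sum_chi_insertNth (i : Fin (n + 1)) (b : Bool) (y : Fin n → Bool) :
    ∑ j, chi (i.insertNth (α := fun _ => Bool) b y j) = chi b + ∑ j, chi (y j) := by
  rw [Fin.sum_univ_succAbove _ i]
  simp only [Fin.insertNth_apply_same, Fin.insertNth_apply_succAbove]

lemma card_filter_card_true_eq (n j : ℕ) :
    #{x : Fin n → Bool | #{i | x i} = j} = n.choose j := by
  calc #{x : Fin n → Bool | #{i | x i} = j}
    _ = #(powersetCard j (univ : Finset (Fin n))) :=
      card_nbij' (fun x => ({i | x i} : Finset (Fin n))) (fun S i => decide (i ∈ S))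
        (fun x hx => by simpa using hx) (fun S hS => by simpa using hS)
        (fun x _ => by simp) (fun S _ => by simp)
    _ = n.choose j := by rw [card_powersetCard, card_fin]

/-- With `c` of the other `n` bits equal to `1`, the bit added to them decides the majority exactly
when `2 * c - n ∈ {-1, 0}`. -/
lemma Maj_insertNth_sub (i : Fin (n + 1)) (y : Fin n → Bool) :
    Maj (n + 1) (i.insertNth true y) - Maj (n + 1) (i.insertNth false y) =
      if #{j | y j} = n / 2 then 2 else 0 := by
  simp only [Maj, sum_chi_insertNth, sum_chi_eq]
  generalize #{j | y j} = c
  simp only [chi, if_true, Bool.false_eq_true, if_false]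
  rcases lt_trichotomy c (n / 2) with hc | hc | hc
  · have : (2 * c + 2 : ℝ) ≤ n := by norm_cast; omega
    rw [if_neg hc.ne, sgn_of_neg (by linarith), sgn_of_neg (by linarith), sub_self]
  · have hl : (2 * c : ℝ) ≤ n := by norm_cast; omega
    have hr : (n : ℝ) ≤ 2 * c + 1 := by norm_cast; omega
    rw [if_pos hc, sgn_of_nonneg (by linarith), sgn_of_neg (by linarith)]
    norm_num
  · have : (n + 1 : ℝ) ≤ 2 * c := by norm_cast; omega
    rw [if_neg hc.ne', sgn_of_nonneg (by linarith), sgn_of_nonneg (by linarith), sub_self]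

lemma fourierCoeff_Maj_singleton (i : Fin (n + 1)) :
    fourierCoeff (Maj (n + 1)) {i} = n.choose (n / 2) / 2 ^ n := by
  simp only [fourierCoeff_singleton, Maj_insertNth_sub, ← sum_filter, sum_const,
    card_filter_card_true_eq, nsmul_eq_mul, pow_succ]
  field_simp

lemma fourierWeight_one_Maj_succ (n : ℕ) :
    fourierWeight 1 (Maj (n + 1)) = (n + 1) * (n.choose (n / 2) / 2 ^ n) ^ 2 := by
  simp [fourierWeight_one_eq_sum_sq, fourierCoeff_Maj_singleton]

/-- The probability that `2 * k` fair signs sum to zero. -/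
noncomputable def tieProb (k : ℕ) : ℝ := k.centralBinom / 4 ^ k

lemma fourierWeight_one_Maj_two_mul (k : ℕ) :
    fourierWeight 1 (Maj (2 * k)) = 2 * k * tieProb k ^ 2 := by
  cases k with
  | zero => simp [fourierWeight_one_eq_sum_sq]
  | succ k =>
    have choose_eq : ((k + 1).centralBinom : ℝ) = 2 * (2 * k + 1).choose k := by
      rw [Nat.centralBinom, mul_add, mul_one, Nat.choose_succ_succ, Nat.choose_symm_half]
      push_cast
      ring
    have four_pow_eq : (4 : ℝ) ^ (k + 1) = 2 * 2 ^ (2 * k + 1) := by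
      rw [← pow_succ', show (4 : ℝ) = 2 ^ 2 by norm_num, ← pow_mul]
      rfl
    rw [show 2 * (k + 1) = 2 * k + 1 + 1 by ring, fourierWeight_one_Maj_succ,
      show (2 * k + 1) / 2 = k by omega, tieProb, choose_eq, four_pow_eq,
      mul_div_mul_left _ _ two_ne_zero]
    push_cast
    ring

end Majority

section TieBreaking

variable {m l : ℕ}

/-- The indicator function of the ties of a majority vote. -/
noncomputable def tie (m : ℕ) : (Fin m → Bool) → ℝ :=
  fun x => if ∑ i, chi (x i) = 0 then 1 else 0

/-- The majority of the first `m` bits, with ties broken by applying `h` to the last `l` bits. -/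
noncomputable def tieBreakMaj (m : ℕ) (h : (Fin l → Bool) → ℝ) : (Fin (m + l) → Bool) → ℝ :=
  fun x => if ∑ i, chi (x (Fin.castAdd l i)) = 0 then h (fun j => x (Fin.natAdd m j))
    else Maj m (fun i => x (Fin.castAdd l i))

lemma tie_even (x : Fin m → Bool) : tie m (fun i => !x i) = tie m x := by
  simp only [tie, sum_chi_not, neg_eq_zero]

lemma fourierCoeff_tie_empty (k : ℕ) : fourierCoeff (tie (2 * k)) ∅ = tieProb k := by
  have sum_eq_zero_iff (x : Fin (2 * k) → Bool) : ∑ i, chi (x i) = 0 ↔ #{i | x i} = k := by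
    rw [sum_chi_eq, sub_eq_zero]
    norm_cast
    omega
  simp only [fourierCoeff, tie, sum_eq_zero_iff, prod_empty, mul_one, sum_boole,
    card_filter_card_true_eq, tieProb, Nat.centralBinom, pow_mul, one_div_mul_eq_div]
  norm_num

lemma tieBreakMaj_eq_add_tensor (h : (Fin l → Bool) → ℝ) :
    tieBreakMaj m h = tensor (Maj m) 1 + tensor (tie m) (h - 1) := by
  ext x
  by_cases hx : ∑ i, chi (x (Fin.castAdd l i)) = 0 <;>
    simp [tieBreakMaj, tensor, tie, Maj, sgn, hx]

lemma fourierCoeff_tieBreakMaj_castAdd (h : (Fin l → Bool) → ℝ) (i : Fin m) :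
    fourierCoeff (tieBreakMaj m h) {Fin.castAdd l i} = fourierCoeff (Maj m) {i} := by
  rw [tieBreakMaj_eq_add_tensor, fourierCoeff_add, fourierCoeff_tensor_castAdd,
    fourierCoeff_tensor_castAdd, fourierCoeff_one_empty,
    fourierCoeff_eq_zero_of_even tie_even (by simp), mul_one, zero_mul, add_zero]

lemma fourierCoeff_tieBreakMaj_natAdd (h : (Fin l → Bool) → ℝ) (j : Fin l) :
    fourierCoeff (tieBreakMaj m h) {Fin.natAdd m j} =
      fourierCoeff (tie m) ∅ * fourierCoeff h {j} := by
  rw [tieBreakMaj_eq_add_tensor, fourierCoeff_add, fourierCoeff_tensor_natAdd,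
    fourierCoeff_tensor_natAdd, fourierCoeff_sub, fourierCoeff_one_of_odd (by simp), mul_zero,
    zero_add, sub_zero]

lemma fourierWeight_one_tieBreakMaj (h : (Fin l → Bool) → ℝ) :
    fourierWeight 1 (tieBreakMaj m h) =
      fourierWeight 1 (Maj m) + fourierCoeff (tie m) ∅ ^ 2 * fourierWeight 1 h := by
  simp only [fourierWeight_one_eq_sum_sq, Fin.sum_univ_add, fourierCoeff_tieBreakMaj_castAdd,
    fourierCoeff_tieBreakMaj_natAdd, mul_pow, mul_sum]

lemma gfun_eq_tieBreakMaj (k : ℕ) : gfun (2 * k + 3) = tieBreakMaj (2 * k) (Maj 3) := by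
  ext x
  have light_le := abs_le.mp (abs_sum_chi_le fun j : Fin 3 => x (Fin.natAdd (2 * k) j))
  have heavy_eq := sum_chi_eq fun i : Fin (2 * k) => x (Fin.castAdd 3 i)
  simp only [gfun, tieBreakMaj, Maj, Fin.sum_univ_add, Fin.val_castAdd, Fin.val_natAdd,
    Nat.add_sub_cancel, Fin.is_lt, if_true, not_lt.mpr (Nat.le_add_right _ _), if_false, one_mul,
    ← mul_sum]
  rw [heavy_eq]
  -- The heavy sum is even, so unless it is zero, its double outweighs the three light bits.
  generalize #{i | x (Fin.castAdd 3 i)} = c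
  push_cast at light_le ⊢
  rcases lt_trichotomy c k with hc | rfl | hc
  · have : (c + 1 : ℝ) ≤ k := by exact_mod_cast hc
    rw [if_neg (by linarith), sgn_of_neg (by linarith), sgn_of_neg (by linarith)]
  · simp
  · have : (k + 1 : ℝ) ≤ c := by exact_mod_cast hc
    rw [if_neg (by linarith), sgn_of_nonneg (by linarith), sgn_of_nonneg (by linarith)]

end TieBreaking

section Limit

open Filter Topology Real

lemma two_mul_add_one_mul_tieProb_sq (k : ℕ) : (2 * k + 1) * tieProb k ^ 2 = (Wallis.W k)⁻¹ := by
  have four_pow_eq : (4 : ℝ) ^ k = 2 ^ (2 * k) := by rw [pow_mul]; norm_num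
  rw [Wallis.W_eq_factorial_ratio, tieProb, Nat.centralBinom_eq_two_mul_choose,
    Nat.cast_choose ℝ (by omega : k ≤ 2 * k), show 2 * k - k = k by omega, four_pow_eq]
  field_simp
  ring

lemma tendsto_two_mul_add_one_mul_tieProb_sq :
    Tendsto (fun k : ℕ => (2 * k + 1) * tieProb k ^ 2) atTop (𝓝 (2 / π)) := by
  simpa only [two_mul_add_one_mul_tieProb_sq, inv_div] using
    Wallis.tendsto_W_nhds_pi_div_two.inv₀ (by positivity)

lemma tendsto_tieProb_sq : Tendsto (fun k => tieProb k ^ 2) atTop (𝓝 0) := by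
  have atTop_odd : Tendsto (fun k : ℕ => (2 * k + 1 : ℝ)) atTop atTop :=
    tendsto_atTop_add_const_right _ _ (tendsto_natCast_atTop_atTop.const_mul_atTop two_pos)
  refine (tendsto_two_mul_add_one_mul_tieProb_sq.div_atTop atTop_odd).congr fun k => ?_
  exact mul_div_cancel_left₀ _ (by positivity)

theorem stmt15_general {l : ℕ} (h : (Fin l → Bool) → ℝ) :
    Tendsto (fun k : ℕ => fourierWeight 1 (tieBreakMaj (2 * k) h)) atTop (𝓝 (2 / π)) := by
  have weight_eq (k : ℕ) : fourierWeight 1 (tieBreakMaj (2 * k) h) =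
      (2 * k + 1) * tieProb k ^ 2 + tieProb k ^ 2 * (fourierWeight 1 h - 1) := by
    rw [fourierWeight_one_tieBreakMaj, fourierWeight_one_Maj_two_mul, fourierCoeff_tie_empty]
    ring
  simpa only [weight_eq, zero_mul, add_zero] using
    tendsto_two_mul_add_one_mul_tieProb_sq.add (tendsto_tieProb_sq.mul_const _)

end Limit

theorem stmt15 :
    Filter.Tendsto (fun k : ℕ => fourierWeight 1 (gfun (2 * k + 3)))
      Filter.atTop (nhds (2 / Real.pi)) := by
  simpa only [gfun_eq_tieBreakMaj] using stmt15_general (Maj 3)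

end BKS
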